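/- Let Λ = KQ/⟨all paths of length L+1⟩ be a truncated path algebra over an algebraically closed field and A the adjacency matrix of Q. For any semisimple sequence S = (S_0,…,S_L) of Λ-modules, the following are equivalent: (i) S is realizable, i.e., there exists a Λ-module M with radical layering S(M) = S; (ii) for every 0 ≤ l ≤ L−1, the two-term sequence (S_l, S_{l+1}) is realizable over Λ/J²; (iii) dim S_{l+1} ≤ (dim S_l)·A componentwise for every 0 ≤ l ≤ L−1. -/

import Mathlib

open Finset

/-! # Varieties of representations of a quiver with relations: basic setup -/

/-- The Zariski topology on the affine space `ι → K`: it is generated by the basic open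
sets `D(p) = {x | p(x) ≠ 0}`, where `p` ranges over multivariate polynomials. -/
def zariskiTopology (ι K : Type) [CommSemiring K] : TopologicalSpace (ι → K) :=
  TopologicalSpace.generateFrom
    {U | ∃ p : MvPolynomial ι K, U = {x | MvPolynomial.eval x p ≠ 0}}

/-- A finite quiver `Q`: vertices `Fin n`, arrows `Fin numArrows` with source and
target maps. -/
structure QuiverData where
  n : ℕ
  numArrows : ℕ
  src : Fin numArrows → Fin n
  tgt : Fin numArrows → Fin n

namespace QuiverData

variable (Q : QuiverData) (d : Fin Q.n → ℕ) (K : Type) [Field K]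

/-- Index of the coordinates of the affine space of `d`-dimensional representations:
for each arrow `a` a matrix entry index in `Fin (d (tgt a)) × Fin (d (src a))`. -/
abbrev Coords := Σ a : Fin Q.numArrows, Fin (d (Q.tgt a)) × Fin (d (Q.src a))

/-- The affine space of `d`-dimensional representations of `Q`:
a point `x` assigns to each arrow `a` a `d (tgt a) × d (src a)` matrix over `K`. -/
abbrev RepSpace := Coords Q d → K

/-- `RepSpace` carries the Zariski topology. -/
noncomputable instance instRepTop : TopologicalSpace (RepSpace Q d K) :=
  zariskiTopology (Coords Q d) K

/-- The underlying `K`-vector space `⊕ᵢ K^{dᵢ}` of any `d`-dimensional representation. -/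
abbrev Carrier := (Σ i : Fin Q.n, Fin (d i)) → K

/-- The projection onto the component of the `i`-th vertex (action of the primitive
idempotent `eᵢ`). -/
def proj (i : Fin Q.n) : Carrier Q d K →ₗ[K] Carrier Q d K where
  toFun m := fun jv => if jv.1 = i then m jv else 0
  map_add' u v := by
    funext jv; by_cases h : jv.1 = i <;> simp [h]
  map_smul' c u := by
    funext jv; by_cases h : jv.1 = i <;> simp [h]

/-- The action of the arrow `a` on the carrier space of the representation `x`. -/
noncomputable def arrowMap (x : RepSpace Q d K) (a : Fin Q.numArrows) :
    Carrier Q d K →ₗ[K] Carrier Q d K where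
  toFun m := fun jv =>
    if h : jv.1 = Q.tgt a then
      ∑ w : Fin (d (Q.src a)), x ⟨a, (Fin.cast (congrArg d h) jv.2, w)⟩ * m ⟨Q.src a, w⟩
    else 0
  map_add' u v := by
    funext jv
    by_cases h : jv.1 = Q.tgt a <;> simp [h, mul_add, Finset.sum_add_distrib]
  map_smul' c u := by
    funext jv
    by_cases h : jv.1 = Q.tgt a <;>
      simp [h, Finset.mul_sum, mul_comm, mul_left_comm, mul_assoc]

/-- The action of a word `w = [a_k, …, a_1]` of arrows on the representation `x`
(the arrow `a_1` acts first; non-composable words act as `0`). -/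
noncomputable def wordMap (x : RepSpace Q d K) (w : List (Fin Q.numArrows)) :
    Module.End K (Carrier Q d K) :=
  (w.map fun a => (arrowMap Q d K x a : Module.End K (Carrier Q d K))).prod

/-- The submodule `J^l · M_x` of the module `M_x`: the sum of the images of all words of
arrows of length `l` (for an admissible ideal, the radical acts through the arrows). -/
noncomputable def radPow (x : RepSpace Q d K) (l : ℕ) : Submodule K (Carrier Q d K) :=
  ⨆ w : {w : List (Fin Q.numArrows) // w.length = l},
    LinearMap.range (wordMap Q d K x w.1)

/-- The socle series of `M_x`: `socPow x l = soc_l(M_x)`. -/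
noncomputable def socPow (x : RepSpace Q d K) : ℕ → Submodule K (Carrier Q d K)
  | 0 => ⨅ a, LinearMap.ker (arrowMap Q d K x a)
  | (l+1) => ⨅ a, (socPow x l).comap (arrowMap Q d K x a)

/-- The dimension, at the vertex `i`, of a (vertex-graded) subspace `N`. -/
noncomputable def vdim (N : Submodule K (Carrier Q d K)) (i : Fin Q.n) : ℕ :=
  Module.finrank K (N.map (proj Q d K i))

/-- The radical layering `S(M_x) = (M/JM, JM/J²M, …, J^L M/J^{L+1} M)` of the module `M_x`,
recorded through the dimension vectors of its semisimple layers. -/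
noncomputable def radLayering (L : ℕ) (x : RepSpace Q d K) :
    Fin (L+1) → Fin Q.n → ℕ :=
  fun l i => vdim Q d K (radPow Q d K x l) i - vdim Q d K (radPow Q d K x (l+1)) i

/-- The socle layering `S*(M_x) = (soc₀M, soc₁M/soc₀M, …)` of the module `M_x`, recorded
through the dimension vectors of its semisimple layers. -/
noncomputable def socLayering (L : ℕ) (x : RepSpace Q d K) :
    Fin (L+1) → Fin Q.n → ℕ :=
  fun l i => vdim Q d K (socPow Q d K x l) i -
    (if (l : ℕ) = 0 then 0 else vdim Q d K (socPow Q d K x ((l : ℕ) - 1)) i)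

end QuiverData

/-- The dominance order on semisimple sequences (recorded as sequences of dimension
vectors): `dominates S S'` means `S ≤ S'`, i.e. `⊕_{j≤l} S_j ⊆ ⊕_{j≤l} S'_j` for all `l`. -/
def dominates {n L : ℕ} (S S' : Fin (L+1) → Fin n → ℕ) : Prop :=
  ∀ (l : Fin (L+1)) (i : Fin n),
    ∑ j ∈ Finset.univ.filter (fun j => j ≤ l), S j i ≤
      ∑ j ∈ Finset.univ.filter (fun j => j ≤ l), S' j i

/-- A semisimple sequence has dimension vector `d` if its layers' dimension vectors sum
to `d`. -/
def hasDimVec {n L : ℕ} (S : Fin (L+1) → Fin n → ℕ) (d : Fin n → ℕ) : Prop :=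
  ∀ i, ∑ l, S l i = d i

namespace QuiverData

variable (Q : QuiverData) (d : Fin Q.n → ℕ) (K : Type) [Field K]

/-- Evaluation of a formal noncommutative polynomial in the vertices (`Sum.inl`) and
arrows (`Sum.inr`) of `Q` on the representation `x`; an element of the path algebra `KQ`
is represented by such a polynomial. -/
noncomputable def evalRel (x : RepSpace Q d K) :
    FreeAlgebra K (Fin Q.n ⊕ Fin Q.numArrows) →ₐ[K] Module.End K (Carrier Q d K) :=
  FreeAlgebra.lift K
    (Sum.elim (fun i => (proj Q d K i : Module.End K (Carrier Q d K)))
      (fun a => (arrowMap Q d K x a : Module.End K (Carrier Q d K))))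

/-- The affine variety `Rep_d(Λ)` for `Λ = KQ/I`, where the ideal `I` is generated by the
set `R` of relations: the set of points of `RepSpace` annihilating every relation. -/
def RepVar (R : Set (FreeAlgebra K (Fin Q.n ⊕ Fin Q.numArrows))) :
    Set (RepSpace Q d K) :=
  {x | ∀ r ∈ R, evalRel Q d K x r = 0}

/-- The affine variety `Rep_d(Λ)` for the truncated path algebra
`Λ = KQ/⟨all paths of length L+1⟩`. -/
def TruncRepVar (L : ℕ) : Set (RepSpace Q d K) :=
  {x | ∀ w : List (Fin Q.numArrows), w.length = L + 1 → wordMap Q d K x w = 0}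

/-- A submodule of `M_x`, i.e. a subspace stable under the arrows and the vertex
idempotents. -/
def Stable (x : RepSpace Q d K) (N : Submodule K (Carrier Q d K)) : Prop :=
  (∀ a, N.map (arrowMap Q d K x a) ≤ N) ∧ ∀ i, N.map (proj Q d K i) ≤ N

/-- A submodule `N` of `M_x` is indecomposable (as a module). -/
def IndecompSub (x : RepSpace Q d K) (N : Submodule K (Carrier Q d K)) : Prop :=
  N ≠ ⊥ ∧ ∀ N₁ N₂ : Submodule K (Carrier Q d K),
    Stable Q d K x N₁ → Stable Q d K x N₂ → N₁ ≤ N → N₂ ≤ N →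
    N₁ ⊔ N₂ = N → N₁ ⊓ N₂ = ⊥ → N₁ = ⊥ ∨ N₂ = ⊥

/-- The module `M_x` is indecomposable. -/
def IndecompRep (x : RepSpace Q d K) : Prop :=
  IndecompSub Q d K x ⊤

/-- The module `M_x` is uniserial: its submodules form a chain. -/
def UniserialRep (x : RepSpace Q d K) : Prop :=
  ∀ N₁ N₂ : Submodule K (Carrier Q d K),
    Stable Q d K x N₁ → Stable Q d K x N₂ → N₁ ≤ N₂ ∨ N₂ ≤ N₁

/-- `M_x` decomposes as a direct sum of `s` indecomposable submodules whose dimension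
vectors are `D 0, …, D (s-1)`. -/
def DecompWith (x : RepSpace Q d K) (s : ℕ) (D : Fin s → Fin Q.n → ℕ) : Prop :=
  ∃ N : Fin s → Submodule K (Carrier Q d K),
    (∀ r, Stable Q d K x (N r)) ∧
    (∀ r, Disjoint (N r) (⨆ t, ⨆ (_ : t ≠ r), N t)) ∧
    (⨆ r, N r) = ⊤ ∧
    (∀ r, IndecompSub Q d K x (N r)) ∧
    ∀ r i, vdim Q d K (N r) i = D r i

/-- A homomorphism of representations `M_x → M_y` (for possibly different dimension
vectors): a linear map commuting with the arrow actions and the vertex projections. -/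
def RepHom (dx dy : Fin Q.n → ℕ) (x : RepSpace Q dx K) (y : RepSpace Q dy K)
    (φ : Carrier Q dx K →ₗ[K] Carrier Q dy K) : Prop :=
  (∀ a, φ ∘ₗ arrowMap Q dx K x a = arrowMap Q dy K y a ∘ₗ φ) ∧
  ∀ i, φ ∘ₗ proj Q dx K i = proj Q dy K i ∘ₗ φ

/-- The submodule `N` of `M_x` is isomorphic, as a representation, to `M_y`. -/
def SubrepIso (dy : Fin Q.n → ℕ) (x : RepSpace Q d K)
    (N : Submodule K (Carrier Q d K)) (y : RepSpace Q dy K) : Prop :=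
  ∃ φ : Carrier Q d K →ₗ[K] Carrier Q dy K,
    N ⊓ LinearMap.ker φ = ⊥ ∧ N.map φ = ⊤ ∧
    (∀ a, ∀ m ∈ N, φ (arrowMap Q d K x a m) = arrowMap Q dy K y a (φ m)) ∧
    (∀ i, ∀ m ∈ N, φ (proj Q d K i m) = proj Q dy K i (φ m))

/-- The representations `M_x` and `M_y` are isomorphic; the isomorphism classes are
exactly the orbits of the `GL(d)`-action. -/
def IsoRep (x y : RepSpace Q d K) : Prop :=
  ∃ φ : Carrier Q d K ≃ₗ[K] Carrier Q d K,
    (∀ a m, φ (arrowMap Q d K x a m) = arrowMap Q d K y a (φ m)) ∧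
    ∀ i m, φ (proj Q d K i m) = proj Q d K i (φ m)

/-- The `GL(d)`-orbit of the point `x`, i.e. the set of points encoding modules
isomorphic to `M_x`. -/
def orbitSet (x : RepSpace Q d K) : Set (RepSpace Q d K) :=
  {y | IsoRep Q d K x y}

/-- Given a family `P` of varieties `Rep_dv(Λ)` (one for every dimension vector `dv`),
`Ext¹_Λ(M_x, M_y) = 0`: every extension `0 → M_y → E → M_x → 0` of `Λ`-modules splits. -/
def Ext1Zero (P : ∀ dv : Fin Q.n → ℕ, Set (RepSpace Q dv K))
    (dx dy : Fin Q.n → ℕ) (x : RepSpace Q dx K) (y : RepSpace Q dy K) : Prop :=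
  ∀ z ∈ P (fun i => dx i + dy i),
    ∀ (ι : Carrier Q dy K →ₗ[K] Carrier Q (fun i => dx i + dy i) K)
      (π : Carrier Q (fun i => dx i + dy i) K →ₗ[K] Carrier Q dx K),
      RepHom Q K dy (fun i => dx i + dy i) y z ι →
      RepHom Q K (fun i => dx i + dy i) dx z x π →
      Function.Injective ι → Function.Surjective π →
      LinearMap.ker π = LinearMap.range ι →
      ∃ σ : Carrier Q dx K →ₗ[K] Carrier Q (fun i => dx i + dy i) K,
        RepHom Q K dx (fun i => dx i + dy i) x z σ ∧ π ∘ₗ σ = LinearMap.id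

/-- The direct sum `C₁ ⊕ ⋯ ⊕ C_s` of subvarieties `C_r ⊆ Rep_{D r}(Λ)`: the set of
points `x ∈ Rep_d(Λ)` whose module decomposes as `M_x ≅ ⊕_r M^{(r)}` with `M^{(r)}`
encoded by a point of `C_r`. -/
def DirectSumSet (s : ℕ) (D : Fin s → Fin Q.n → ℕ)
    (Cs : ∀ r : Fin s, Set (RepSpace Q (D r) K)) : Set (RepSpace Q d K) :=
  {x | ∃ N : Fin s → Submodule K (Carrier Q d K),
    (∀ r, Stable Q d K x (N r)) ∧
    (∀ r, Disjoint (N r) (⨆ t, ⨆ (_ : t ≠ r), N t)) ∧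
    (⨆ r, N r) = ⊤ ∧
    ∀ r, ∃ y ∈ Cs r, SubrepIso Q d K (D r) x (N r) y}

/-- The endomorphism space `End_Λ(M_x)` of the module `M_x`. -/
def endSpace (x : RepSpace Q d K) :
    Submodule K (Carrier Q d K →ₗ[K] Carrier Q d K) where
  carrier := {φ | RepHom Q K d d x x φ}
  add_mem' := by
    intro φ ψ hφ hψ
    exact ⟨fun a => by rw [LinearMap.add_comp, LinearMap.comp_add, hφ.1 a, hψ.1 a],
      fun i => by rw [LinearMap.add_comp, LinearMap.comp_add, hφ.2 i, hψ.2 i]⟩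
  zero_mem' := by
    exact ⟨fun a => by simp, fun i => by simp⟩
  smul_mem' := by
    intro c φ hφ
    exact ⟨fun a => by rw [LinearMap.smul_comp, LinearMap.comp_smul, hφ.1 a],
      fun i => by rw [LinearMap.smul_comp, LinearMap.comp_smul, hφ.2 i]⟩

/-- A word of arrows is a (composable) path when read in function-composition order. -/
def IsPathWord (w : List (Fin Q.numArrows)) : Prop :=
  List.Chain' (fun a b => Q.src a = Q.tgt b) w

/-- The quiver `Q` has no oriented cycles. -/
def Acyclic : Prop :=
  ∀ (a : Fin Q.numArrows) (w : List (Fin Q.numArrows)),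
    IsPathWord Q (a :: w) →
      Q.tgt a ≠ Q.src ((a :: w).getLast (List.cons_ne_nil a w))

/-- A filtration `M_x = F 0 ⊇ F 1 ⊇ ⋯ ⊇ F (L+1) = 0` by submodules which is governed by
the semisimple sequence `S`: each layer `F l / F (l+1)` is semisimple, isomorphic to `S l`. -/
def Governed (L : ℕ) (x : RepSpace Q d K) (S : Fin (L+1) → Fin Q.n → ℕ)
    (F : Fin (L+2) → Submodule K (Carrier Q d K)) : Prop :=
  F 0 = ⊤ ∧ F (Fin.last (L+1)) = ⊥ ∧
  (∀ l : Fin (L+1), F l.succ ≤ F l.castSucc) ∧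
  (∀ (l : Fin (L+2)) (i : Fin Q.n), (F l).map (proj Q d K i) ≤ F l) ∧
  (∀ (l : Fin (L+1)) (a : Fin Q.numArrows),
      (F l.castSucc).map (arrowMap Q d K x a) ≤ F l.succ) ∧
  ∀ (l : Fin (L+1)) (i : Fin Q.n),
      vdim Q d K (F l.castSucc) i = S l i + vdim Q d K (F l.succ) i

/-- `Filt S`: the set of points whose module has a filtration governed by `S`. -/
def FiltSet (L : ℕ) (S : Fin (L+1) → Fin Q.n → ℕ) : Set (RepSpace Q d K) :=
  {x | ∃ F, Governed Q d K L x S F}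

/-- `Γ(M_x)`: the number of semisimple sequences which are realizable (i.e. occur as the
radical layering of a module in the variety `P`) and which govern some filtration of `M_x`. -/
noncomputable def gammaCount (L : ℕ) (P : Set (RepSpace Q d K))
    (x : RepSpace Q d K) : ℕ :=
  Set.ncard {S : Fin (L+1) → Fin Q.n → ℕ |
    (∃ y ∈ P, radLayering Q d K L y = S) ∧ ∃ F, Governed Q d K L x S F}

/-- `Sstar` is the generic (= minimal, attained) socle layering of the modules in `W`. -/
def GenSoc (L : ℕ) (W : Set (RepSpace Q d K))
    (Sstar : Fin (L+1) → Fin Q.n → ℕ) : Prop :=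
  (∀ x ∈ W, dominates Sstar (socLayering Q d K L x)) ∧
  ∃ x ∈ W, socLayering Q d K L x = Sstar

end QuiverData

namespace QuiverData

variable (Q : QuiverData)

/-- The `i`-th entry of the row vector `e·A` (over `ℤ`), where `A` is the adjacency
matrix of `Q`: the sum of `e (src a)` over all arrows `a` ending at `i`. -/
def inflowZ (e : Fin Q.n → ℤ) (i : Fin Q.n) : ℤ :=
  ∑ a ∈ Finset.univ.filter (fun a => Q.tgt a = i), e (Q.src a)

/-- The `i`-th entry of the row vector `e·B` (over `ℤ`), where `B` is the transpose of
the adjacency matrix of `Q`. -/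
def outflowZ (e : Fin Q.n → ℤ) (i : Fin Q.n) : ℤ :=
  ∑ a ∈ Finset.univ.filter (fun a => Q.src a = i), e (Q.tgt a)

/-- Partial sums `t⁽⁰⁾ + ⋯ + t⁽ˡ⁾` of the recursion
`t⁽⁰⁾ = sup{0, d − d·A}`, `t⁽ˡ⁺¹⁾ = sup{0, (d − ∑_{k≤l} t⁽ᵏ⁾) − (d − ∑_{k≤l} t⁽ᵏ⁾)·A}`
(computed componentwise). -/
def cumLayer (dz : Fin Q.n → ℤ) : ℕ → Fin Q.n → ℤ
  | 0 => fun i => max 0 (dz i - inflowZ Q dz i)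
  | (l+1) => fun i =>
      cumLayer dz l i +
        max 0 ((dz i - cumLayer dz l i) -
          inflowZ Q (fun j => dz j - cumLayer dz l j) i)

/-- The positive part `∑ᵢ eᵢ fᵢ` of the Euler form of `Q`. -/
def eulerHomPart (e f : Fin Q.n → ℕ) : ℕ := ∑ i, e i * f i

/-- The negative part `∑_{α} e_{src α} f_{tgt α}` of the Euler form of `Q`, so that
`⟨e, f⟩ = eulerHomPart e f − eulerExtPart e f`. -/
def eulerExtPart (e f : Fin Q.n → ℕ) : ℕ :=
  ∑ a, e (Q.src a) * f (Q.tgt a)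

end QuiverData

/-- The quiver with a single vertex and `r` loops. -/
def QuiverData.loopQuiver (r : ℕ) : QuiverData :=
  ⟨1, r, fun _ => 0, fun _ => 0⟩

namespace QuiverData

variable (Q : QuiverData) (d : Fin Q.n → ℕ) (K : Type) [Field K]

/-- The variety `Rep_d(Λ)` for `Λ = KQ/⟨Rels⟩`, regarded as a topological space with the
(subspace) Zariski topology. -/
abbrev GenV (Rels : Set (FreeAlgebra K (Fin Q.n ⊕ Fin Q.numArrows))) :=
  {y : RepSpace Q d K // y ∈ RepVar Q d K Rels}

/-- The variety `Rep_d(Λ)` for the truncated path algebra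
`Λ = KQ/⟨paths of length L+1⟩`, regarded as a topological space. -/
abbrev TruncV (L : ℕ) := {y : RepSpace Q d K // y ∈ TruncRepVar Q d K L}

end QuiverData

/-! Left multiplication by arrows induces a surjection
`⨁_{a : j → i} e_j (JˡM / Jˡ⁺¹M) → e_i (Jˡ⁺¹M / Jˡ⁺²M)`, which bounds the layers of any module.
Conversely, take a vector space with the prescribed graded basis. The inequalities say exactly that
every basis element of layer `l + 1` can be matched, injectively, with a pair consisting of an arrow
into its vertex and a basis element of layer `l` at the source of that arrow. Letting each arrow
send a basis element to the one matched with the pair, or to zero if there is none, gives a module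
whose `l`-th radical power is spanned by the basis elements of layer at least `l`. -/

section LinearAlgebra

theorem finrank_biSup_le_sum {K V ι : Type*} [DivisionRing K] [AddCommGroup V] [Module K V]
    [FiniteDimensional K V] (s : Finset ι) (C : ι → Submodule K V) :
    Module.finrank K (⨆ a ∈ s, C a : Submodule K V) ≤ ∑ a ∈ s, Module.finrank K (C a) := by
  classical
  induction s using Finset.induction_on with
  | empty => simp
  | insert a s ha ih =>
    rw [Finset.iSup_insert, Finset.sum_insert ha]
    exact (Submodule.finrank_add_le_finrank_add_finrank _ _).trans (by gcongr)

theorem finrank_biSup_map_le {K V W ι : Type*} [DivisionRing K]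
    [AddCommGroup V] [Module K V] [FiniteDimensional K V]
    [AddCommGroup W] [Module K W] [FiniteDimensional K W]
    (s : Finset ι) (f : ι → V →ₗ[K] W) {A B : ι → Submodule K V} (hBA : ∀ a, B a ≤ A a) :
    Module.finrank K (⨆ a ∈ s, (A a).map (f a) : Submodule K W) ≤
      Module.finrank K (⨆ a ∈ s, (B a).map (f a) : Submodule K W) +
        ∑ a ∈ s, (Module.finrank K (A a) - Module.finrank K (B a)) := by
  choose C hdisj hsup using fun a => IsModularLattice.exists_disjoint_and_sup_eq (hBA a)
  have finrank_C (a : ι) :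
      Module.finrank K (C a) = Module.finrank K (A a) - Module.finrank K (B a) := by
    have := Submodule.finrank_sup_add_finrank_inf_eq (B a) (C a)
    rw [hsup, (hdisj a).eq_bot, finrank_bot] at this
    omega
  have map_A : (⨆ a ∈ s, (A a).map (f a)) =
      (⨆ a ∈ s, (B a).map (f a)) ⊔ ⨆ a ∈ s, (C a).map (f a) := by
    simp only [← hsup, Submodule.map_sup, iSup_sup_eq]
  calc Module.finrank K (⨆ a ∈ s, (A a).map (f a) : Submodule K W)
      ≤ Module.finrank K (⨆ a ∈ s, (B a).map (f a) : Submodule K W) +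
          Module.finrank K (⨆ a ∈ s, (C a).map (f a) : Submodule K W) := by
        rw [map_A]
        exact Submodule.finrank_add_le_finrank_add_finrank _ _
    _ ≤ Module.finrank K (⨆ a ∈ s, (B a).map (f a) : Submodule K W) +
          ∑ a ∈ s, Module.finrank K ((C a).map (f a)) := by
        gcongr
        exact finrank_biSup_le_sum s _
    _ ≤ _ := by
        gcongr with a
        exact (Submodule.finrank_map_le _ _).trans_eq (finrank_C a)

theorem spanSubset_le_iff {R ι : Type*} [Semiring R] [Finite ι] [DecidableEq ι] {T : Set ι}
    {N : Submodule R (ι → R)} : Pi.spanSubset R T ≤ N ↔ ∀ j ∈ T, Pi.single j 1 ∈ N := by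
  simp [Pi.spanSubset, Submodule.span_le, Set.subset_def]

theorem single_mem_spanSubset {R ι : Type*} [Semiring R] [Finite ι] [DecidableEq ι] {T : Set ι}
    {j : ι} (hj : j ∈ T) : Pi.single j 1 ∈ Pi.spanSubset R T :=
  spanSubset_le_iff.1 le_rfl j hj

end LinearAlgebra

section Counting

theorem card_filter_sigma {α : Type*} {β : α → Type*} [Fintype α] [∀ a, Fintype (β a)]
    (p : α → Prop) (q : (Σ a, β a) → Prop) [DecidablePred p] [DecidablePred q] :
    #{x : Σ a, β a | p x.1 ∧ q x} = ∑ a with p a, #{b | q ⟨a, b⟩} := by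
  rw [← Finset.card_sigma]
  congr 1
  ext x
  simp

theorem exists_embedding_comp_eq {α β γ : Type*} [Fintype α] [Fintype β] [DecidableEq γ]
    (g : α → γ) (h : β → γ) (hcard : ∀ c, #{a | g a = c} ≤ #{b | h b = c}) :
    ∃ f : α ↪ β, h ∘ f = g := by
  have fiberEmb (c : γ) : Nonempty ({a // g a = c} ↪ {b // h b = c}) :=
    Function.Embedding.nonempty_of_card_le (by simpa only [Fintype.card_subtype] using hcard c)
  let e (c : γ) : {a // g a = c} ↪ {b // h b = c} := (fiberEmb c).some
  refine ⟨(Equiv.sigmaFiberEquiv g).symm.toEmbedding.trans <|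
    (Function.Embedding.sigmaMap (.refl γ) e).trans (Equiv.sigmaFiberEquiv h).toEmbedding, ?_⟩
  exact funext fun a => (e (g a) ⟨a, rfl⟩).2

theorem exists_card_fiber_eq {κ : Type*} [Fintype κ] [DecidableEq κ] {n : ℕ} (c : κ → ℕ)
    (hc : ∑ k, c k = n) : ∃ f : Fin n → κ, ∀ k, #{v | f v = k} = c k := by
  have e : (Σ k, Fin (c k)) ≃ Fin n := Fintype.equivFinOfCardEq (by simpa using hc)
  refine ⟨fun v => (e.symm v).1, fun k => ?_⟩
  calc #{v | (e.symm v).1 = k}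
      = Fintype.card {v // (e.symm v).1 = k} := (Fintype.card_subtype _).symm
    _ = Fintype.card {s : Σ k, Fin (c k) // s.1 = k} :=
        Fintype.card_congr (e.symm.subtypeEquiv fun _ => Iff.rfl)
    _ = c k := by rw [Fintype.card_congr (Equiv.sigmaSubtype k), Fintype.card_fin]

end Counting

namespace QuiverData

variable {Q : QuiverData} {d : Fin Q.n → ℕ} {K : Type} [Field K]

/-- The row vector `e·A` over `ℕ`, where `A` is the adjacency matrix of `Q`; see `inflowZ` for the
version over `ℤ`. -/
def inflow (Q : QuiverData) (e : Fin Q.n → ℕ) (i : Fin Q.n) : ℕ :=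
  ∑ a with Q.tgt a = i, e (Q.src a)

variable (K) in
/-- The semisimple sequence `S`, recorded through the dimension vectors of its entries, is the
radical layering of a module over `KQ/⟨paths of length L+1⟩`. The dimension vector `d` of the module
is a parameter, since it determines the ambient space `RepSpace Q d K`. -/
def Realizable (d : Fin Q.n → ℕ) {L : ℕ} (S : Fin (L + 1) → Fin Q.n → ℕ) : Prop :=
  ∃ x ∈ TruncRepVar Q d K L, radLayering Q d K L x = S

section Radical

theorem wordMap_cons (x : RepSpace Q d K) (a : Fin Q.numArrows) (w : List (Fin Q.numArrows)) :
    wordMap Q d K x (a :: w) = arrowMap Q d K x a ∘ₗ wordMap Q d K x w :=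
  rfl

theorem radPow_zero (x : RepSpace Q d K) : radPow Q d K x 0 = ⊤ :=
  eq_top_iff.2 <| le_iSup_of_le ⟨[], rfl⟩ LinearMap.range_id.ge

theorem radPow_succ (x : RepSpace Q d K) (l : ℕ) :
    radPow Q d K x (l + 1) = ⨆ a, (radPow Q d K x l).map (arrowMap Q d K x a) := by
  simp only [radPow, Submodule.map_iSup, ← LinearMap.range_comp, ← wordMap_cons]
  refine le_antisymm (iSup_le ?_) (iSup_le fun a => iSup_le fun w => ?_)
  · rintro ⟨_ | ⟨a, w⟩, hw⟩
    · simp at hw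
    · exact le_iSup₂_of_le a ⟨w, Nat.succ.inj hw⟩ le_rfl
  · exact le_iSup_of_le ⟨a :: w.1, congrArg Nat.succ w.2⟩ le_rfl

theorem radPow_antitone (x : RepSpace Q d K) : Antitone (radPow Q d K x) := by
  refine antitone_nat_of_succ_le fun l => ?_
  induction l with
  | zero => exact (radPow_zero x).symm ▸ le_top
  | succ l ih =>
    calc radPow Q d K x (l + 1 + 1)
        = ⨆ a, (radPow Q d K x (l + 1)).map (arrowMap Q d K x a) := radPow_succ x (l + 1)
      _ ≤ ⨆ a, (radPow Q d K x l).map (arrowMap Q d K x a) :=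
          iSup_mono fun a => Submodule.map_mono ih
      _ = radPow Q d K x (l + 1) := (radPow_succ x l).symm

theorem mem_truncRepVar_iff {L : ℕ} {x : RepSpace Q d K} :
    x ∈ TruncRepVar Q d K L ↔ radPow Q d K x (L + 1) = ⊥ := by
  simp [TruncRepVar, radPow, LinearMap.range_eq_bot]

theorem arrowMap_apply_of_ne (x : RepSpace Q d K) {a : Fin Q.numArrows} (m : Carrier Q d K)
    {j : Σ i, Fin (d i)} (hj : j.1 ≠ Q.tgt a) : arrowMap Q d K x a m j = 0 :=
  dif_neg hj

theorem proj_comp_arrowMap (x : RepSpace Q d K) (a : Fin Q.numArrows) (i : Fin Q.n) :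
    proj Q d K i ∘ₗ arrowMap Q d K x a = if Q.tgt a = i then arrowMap Q d K x a else 0 := by
  refine LinearMap.ext fun m => funext fun j => ?_
  by_cases hj : j.1 = Q.tgt a
  · split_ifs with h <;> simp [proj, hj, h]
  · split_ifs <;> simp [proj, arrowMap_apply_of_ne x m hj]

theorem arrowMap_comp_proj_src (x : RepSpace Q d K) (a : Fin Q.numArrows) :
    arrowMap Q d K x a ∘ₗ proj Q d K (Q.src a) = arrowMap Q d K x a := by
  refine LinearMap.ext fun m => funext fun j => ?_
  simp [proj, arrowMap]

theorem map_proj_radPow_succ (x : RepSpace Q d K) (l : ℕ) (i : Fin Q.n) :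
    (radPow Q d K x (l + 1)).map (proj Q d K i) =
      ⨆ a ∈ ({a | Q.tgt a = i} : Finset _),
        ((radPow Q d K x l).map (proj Q d K (Q.src a))).map (arrowMap Q d K x a) := by
  rw [radPow_succ, Submodule.map_iSup]
  refine iSup_congr fun a => ?_
  rw [← Submodule.map_comp, ← Submodule.map_comp, proj_comp_arrowMap, arrowMap_comp_proj_src]
  split_ifs with h <;> simp [h]

theorem radLayering_succ_le_inflow {L : ℕ} (x : RepSpace Q d K) (l : Fin L) (i : Fin Q.n) :
    radLayering Q d K L x l.succ i ≤ Q.inflow (radLayering Q d K L x l.castSucc) i := by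
  have vertex_bound := finrank_biSup_map_le ({a | Q.tgt a = i} : Finset _) (arrowMap Q d K x)
    fun a => Submodule.map_mono (f := proj Q d K (Q.src a)) (radPow_antitone x (Nat.le_succ l))
  rw [← map_proj_radPow_succ, ← map_proj_radPow_succ] at vertex_bound
  exact Nat.sub_le_iff_le_add'.2 vertex_bound

end Radical

section Coordinates

theorem proj_single (i : Fin Q.n) (j : Σ i, Fin (d i)) :
    proj Q d K i (Pi.single j 1) = if j.1 = i then Pi.single j 1 else 0 := by
  ext k
  by_cases hkj : k = j <;> by_cases hj : j.1 = i <;> simp [proj, *]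

theorem map_proj_spanSubset (T : Set (Σ i, Fin (d i))) (i : Fin Q.n) :
    (Pi.spanSubset K T).map (proj Q d K i) = Pi.spanSubset K {j ∈ T | j.1 = i} := by
  refine le_antisymm (Submodule.map_le_iff_le_comap.2 <| spanSubset_le_iff.2 fun j hj => ?_)
    (spanSubset_le_iff.2 fun j hj => ?_)
  · rw [Submodule.mem_comap, proj_single]
    split_ifs with h
    exacts [single_mem_spanSubset ⟨hj, h⟩, zero_mem _]
  · exact ⟨_, single_mem_spanSubset hj.1, by rw [proj_single, if_pos hj.2]⟩

theorem vdim_spanSubset (T : Set (Σ i, Fin (d i))) (i : Fin Q.n) :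
    vdim Q d K (Pi.spanSubset K T) i = (Sigma.mk i ⁻¹' T).ncard := by
  have vertex_part : {j ∈ T | j.1 = i} = Sigma.mk i '' (Sigma.mk i ⁻¹' T) := by
    rw [Set.image_preimage_eq_inter_range, Set.range_sigmaMk]
    rfl
  rw [vdim, map_proj_spanSubset, Pi.dim_spanSubset, vertex_part,
    Set.ncard_image_of_injective _ sigma_mk_injective]

theorem arrowMap_single_of_ne (x : RepSpace Q d K) {a : Fin Q.numArrows} {j : Σ i, Fin (d i)}
    (hj : j.1 ≠ Q.src a) : arrowMap Q d K x a (Pi.single j 1) = 0 := by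
  rw [← arrowMap_comp_proj_src, LinearMap.comp_apply, proj_single, if_neg hj, map_zero]

theorem arrowMap_single_src_apply_tgt (x : RepSpace Q d K) (a : Fin Q.numArrows)
    (w : Fin (d (Q.src a))) (v : Fin (d (Q.tgt a))) :
    arrowMap Q d K x a (Pi.single ⟨Q.src a, w⟩ 1) ⟨Q.tgt a, v⟩ = x ⟨a, (v, w)⟩ := by
  simp [arrowMap, Pi.single_apply]

end Coordinates

section Skeleton

/-- The dimension vector of the `k`-th layer of the graded vector space with basis `Σ i, Fin (d i)`,
where `lay` assigns to every basis element the index of its layer. -/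
def layerDim (lay : (Σ i, Fin (d i)) → ℕ) (k : ℕ) (i : Fin Q.n) : ℕ :=
  #{v | lay ⟨i, v⟩ = k}

/-- A skeleton, that is, a basis of paths compatible with the layering `lay`, encoded as a forest on
the basis `Σ i, Fin (d i)`. Every basis element `j` outside layer `0` is to be the product of an
arrow and a basis element in the preceding layer; `parent j` consists of this arrow and of the index
of that basis element at the source of the arrow. -/
structure Skeleton (lay : (Σ i, Fin (d i)) → ℕ) where
  parent : {j // 0 < lay j} ↪ Σ a : Fin Q.numArrows, Fin (d (Q.src a))
  tgt_parent (j : {j // 0 < lay j}) : Q.tgt (parent j).1 = j.1.1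
  lay_parent (j : {j // 0 < lay j}) : lay ⟨Q.src (parent j).1, (parent j).2⟩ + 1 = lay j

variable {lay : (Σ i, Fin (d i)) → ℕ}

theorem nonempty_skeleton (h : ∀ k i, layerDim lay (k + 1) i ≤ Q.inflow (layerDim lay k) i) :
    Nonempty (Skeleton lay) := by
  let place : {j // 0 < lay j} → Fin Q.n × ℕ := fun j => (j.1.1, lay j)
  let reach : (Σ a, Fin (d (Q.src a))) → Fin Q.n × ℕ := fun p =>
    (Q.tgt p.1, lay ⟨Q.src p.1, p.2⟩ + 1)
  have hcard : ∀ c, #{j | place j = c} ≤ #{p | reach p = c} := by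
    rintro ⟨i, _ | k⟩
    · have no_layer_zero : ({j | place j = (i, 0)} : Finset _) = ∅ :=
        Finset.filter_eq_empty_iff.2 fun j _ hj => j.2.ne' (congrArg Prod.snd hj)
      simp [no_layer_zero]
    · calc #{j | place j = (i, k + 1)}
          ≤ #{j : Σ i, Fin (d i) | j.1 = i ∧ lay j = k + 1} :=
            Finset.card_le_card_of_injOn Subtype.val (by simp [place, Set.MapsTo])
              Subtype.val_injective.injOn
        _ = layerDim lay (k + 1) i := by
            rw [card_filter_sigma (· = i) (lay · = k + 1)]
            simp [Finset.filter_eq', layerDim]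
        _ ≤ Q.inflow (layerDim lay k) i := h k i
        _ = #{p | reach p = (i, k + 1)} := by
            simp only [reach, Prod.mk.injEq, Nat.add_right_cancel_iff]
            exact (card_filter_sigma (β := fun a => Fin (d (Q.src a))) (Q.tgt · = i)
              fun p => lay ⟨Q.src p.1, p.2⟩ = k).symm
  obtain ⟨parent, hparent⟩ := exists_embedding_comp_eq place reach hcard
  have reach_parent (j) : reach (parent j) = place j := congrFun hparent j
  exact ⟨parent, fun j => congrArg Prod.fst (reach_parent j),
    fun j => congrArg Prod.snd (reach_parent j)⟩

theorem exists_layerDim_eq {L : ℕ} {S : Fin (L + 1) → Fin Q.n → ℕ} (hS : hasDimVec S d) :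
    ∃ lay : (Σ i, Fin (d i)) → ℕ, (∀ j, lay j ≤ L) ∧ ∀ l, layerDim lay (l : Fin (L + 1)) = S l := by
  choose lay hlay using fun i => exists_card_fiber_eq (S · i) (hS i)
  refine ⟨fun j => lay j.1 j.2, fun j => Fin.is_le _, fun l => funext fun i => ?_⟩
  simpa only [layerDim, Fin.val_inj] using hlay i l

namespace Skeleton

variable (σ : Skeleton lay)

variable (K) in
/-- The representation in which an arrow `a` sends a basis element `w` to the basis element with
parent `(a, w)`, and to `0` if there is none. -/
def rep : RepSpace Q d K :=
  fun c => if ∃ h : 0 < lay ⟨Q.tgt c.1, c.2.1⟩, σ.parent ⟨_, h⟩ = ⟨c.1, c.2.2⟩ then 1 else 0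

theorem arrowMap_rep_single_src_apply (a : Fin Q.numArrows) (w : Fin (d (Q.src a)))
    (j : Σ i, Fin (d i)) :
    arrowMap Q d K (σ.rep K) a (Pi.single ⟨Q.src a, w⟩ 1) j =
      if ∃ h : 0 < lay j, σ.parent ⟨j, h⟩ = ⟨a, w⟩ then 1 else 0 := by
  by_cases hj : j.1 = Q.tgt a
  · obtain ⟨_, v⟩ := j
    subst hj
    exact arrowMap_single_src_apply_tgt _ _ _ _
  · rw [arrowMap_apply_of_ne _ _ hj, if_neg]
    rintro ⟨h, hparent⟩
    exact hj (by rw [← σ.tgt_parent ⟨j, h⟩, hparent])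

theorem arrowMap_rep_single_of_parent_eq {j : {j // 0 < lay j}} {a : Fin Q.numArrows}
    {w : Fin (d (Q.src a))} (h : σ.parent j = ⟨a, w⟩) :
    arrowMap Q d K (σ.rep K) a (Pi.single ⟨Q.src a, w⟩ 1) = Pi.single j.1 1 := by
  ext k
  rw [arrowMap_rep_single_src_apply, Pi.single_apply, ← h]
  congr 1
  simp only [σ.parent.injective.eq_iff, Subtype.ext_iff, eq_iff_iff]
  exact ⟨fun ⟨_, hk⟩ => hk, fun hk => ⟨hk ▸ j.2, hk⟩⟩

theorem arrowMap_rep_single_of_forall_parent_ne {a : Fin Q.numArrows} {w : Fin (d (Q.src a))}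
    (h : ∀ j, σ.parent j ≠ ⟨a, w⟩) :
    arrowMap Q d K (σ.rep K) a (Pi.single ⟨Q.src a, w⟩ 1) = 0 := by
  ext k
  rw [arrowMap_rep_single_src_apply, if_neg fun ⟨_, hk⟩ => h _ hk, Pi.zero_apply]

theorem arrowMap_rep_single_mem (a : Fin Q.numArrows) {j : Σ i, Fin (d i)} {l : ℕ}
    (hj : l ≤ lay j) :
    arrowMap Q d K (σ.rep K) a (Pi.single j 1) ∈ Pi.spanSubset K {j | l + 1 ≤ lay j} := by
  obtain ⟨i, w⟩ := j
  by_cases hi : i = Q.src a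
  · subst hi
    by_cases hchild : ∃ k, σ.parent k = ⟨a, w⟩
    · obtain ⟨k, hk⟩ := hchild
      have lay_k : lay ⟨Q.src a, w⟩ + 1 = lay k := by
        rw [← σ.lay_parent k, hk]
      rw [arrowMap_rep_single_of_parent_eq σ hk]
      exact single_mem_spanSubset ((Nat.succ_le_succ hj).trans_eq lay_k)
    · rw [arrowMap_rep_single_of_forall_parent_ne σ (not_exists.1 hchild)]
      exact zero_mem _
  · rw [arrowMap_single_of_ne _ hi]
    exact zero_mem _

theorem radPow_rep (l : ℕ) :
    radPow Q d K (σ.rep K) l = Pi.spanSubset K {j | l ≤ lay j} := by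
  induction l with
  | zero =>
    rw [radPow_zero, eq_comm, eq_top_iff]
    exact fun m _ => Pi.mem_spanSubset_iff.2 fun j hj => absurd (Nat.zero_le _) hj
  | succ l ih =>
    rw [radPow_succ, ih]
    refine le_antisymm (iSup_le fun a => ?_) (spanSubset_le_iff.2 fun j (hj : l < lay j) => ?_)
    · exact Submodule.map_le_iff_le_comap.2 <| spanSubset_le_iff.2 fun j hj =>
        σ.arrowMap_rep_single_mem a hj
    · let k : {j // 0 < lay j} := ⟨j, Nat.zero_lt_of_lt hj⟩
      have hl : l ≤ lay ⟨Q.src (σ.parent k).1, (σ.parent k).2⟩ :=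
        Nat.le_of_lt_succ (hj.trans_eq (σ.lay_parent k).symm)
      exact Submodule.mem_iSup_of_mem (σ.parent k).1
        ⟨_, single_mem_spanSubset hl, σ.arrowMap_rep_single_of_parent_eq rfl⟩

theorem rep_mem_truncRepVar {L : ℕ} (hL : ∀ j, lay j ≤ L) : σ.rep K ∈ TruncRepVar Q d K L := by
  have no_layer : {j | L + 1 ≤ lay j} = ∅ :=
    Set.eq_empty_of_forall_notMem fun j => (Nat.lt_succ_of_le (hL j)).not_ge
  rw [mem_truncRepVar_iff, radPow_rep, no_layer]
  simp [Pi.spanSubset]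

theorem radLayering_rep (L : ℕ) (l : Fin (L + 1)) :
    radLayering Q d K L (σ.rep K) l = layerDim lay l := by
  funext i
  have deeper_subset : {v | l + 1 ≤ lay ⟨i, v⟩} ⊆ {v | (l : ℕ) ≤ lay ⟨i, v⟩} :=
    fun v => Nat.le_of_succ_le
  have sdiff_deeper :
      {v | (l : ℕ) ≤ lay ⟨i, v⟩} \ {v | l + 1 ≤ lay ⟨i, v⟩} = {v | lay ⟨i, v⟩ = l} := by
    ext v
    simp only [Set.mem_sdiff, Set.mem_ofPred_eq]
    omega
  calc radLayering Q d K L (σ.rep K) l i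
      = {v | (l : ℕ) ≤ lay ⟨i, v⟩}.ncard - {v | l + 1 ≤ lay ⟨i, v⟩}.ncard := by
        simp only [radLayering, radPow_rep, vdim_spanSubset, Set.preimage_ofPred_eq]
    _ = {v | lay ⟨i, v⟩ = l}.ncard := by rw [← Set.ncard_sdiff deeper_subset, sdiff_deeper]
    _ = layerDim lay l i := by rw [layerDim, Set.ncard_eq_toFinset_card', Set.toFinset_ofPred]

end Skeleton

end Skeleton

theorem realizable_iff {L : ℕ} {S : Fin (L + 1) → Fin Q.n → ℕ} (hS : hasDimVec S d) :
    Realizable K d S ↔ ∀ (l : Fin L) (i : Fin Q.n), S l.succ i ≤ Q.inflow (S l.castSucc) i := by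
  constructor
  · rintro ⟨x, -, rfl⟩
    exact radLayering_succ_le_inflow x
  · intro h
    obtain ⟨lay, hL, hlay⟩ := exists_layerDim_eq hS
    have layers_le (k : ℕ) (i : Fin Q.n) :
        layerDim lay (k + 1) i ≤ Q.inflow (layerDim lay k) i := by
      by_cases hk : k < L
      · have := h ⟨k, hk⟩ i
        rwa [← hlay, ← hlay] at this
      · have no_layer : layerDim lay (k + 1) i = 0 :=
          Finset.card_eq_zero.2 <| Finset.filter_eq_empty_iff.2 fun v _ hv => by
            have := hL ⟨i, v⟩
            omega
        simp [no_layer]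
    obtain ⟨σ⟩ := nonempty_skeleton layers_le
    exact ⟨σ.rep K, σ.rep_mem_truncRepVar hL,
      funext fun l => (σ.radLayering_rep L l).trans (hlay l)⟩

end QuiverData

open QuiverData in
theorem statement_10_general (K : Type) [Field K] (Q : QuiverData) (L : ℕ)
    (S : Fin (L + 1) → Fin Q.n → ℕ) :
    (Realizable K (fun i => ∑ l, S l i) S ↔
      ∀ (l : Fin L) (i : Fin Q.n), S l.succ i ≤ Q.inflow (S l.castSucc) i) ∧
    ((∀ l : Fin L, Realizable K (L := 1) (fun i => S l.castSucc i + S l.succ i)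
        ![S l.castSucc, S l.succ]) ↔
      ∀ (l : Fin L) (i : Fin Q.n), S l.succ i ≤ Q.inflow (S l.castSucc) i) := by
  refine ⟨realizable_iff fun _ => rfl, forall_congr' fun l => ?_⟩
  rw [realizable_iff fun i => by simp [Fin.sum_univ_two], Fin.forall_fin_one]
  rfl

open QuiverData in
/-- Realizability criterion over a truncated path algebra: a semisimple
sequence `S = (S_0, …, S_L)` is realizable iff each consecutive pair `(S_l, S_{l+1})` is
realizable over `Λ/J²` iff `dim S_{l+1} ≤ (dim S_l)·A` componentwise for all `l < L`
(`A` the adjacency matrix). (Stated as (i) ↔ (iii) and (ii) ↔ (iii).) -/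
theorem statement_10 (K : Type) [Field K] [IsAlgClosed K]
    (Q : QuiverData) (L : ℕ) (hL : 0 < L)
    (S : Fin (L+1) → Fin Q.n → ℕ) :
    ((∃ x ∈ TruncRepVar Q (fun i => ∑ l, S l i) K L,
        radLayering Q (fun i => ∑ l, S l i) K L x = S) ↔
      ∀ (l : Fin L) (i : Fin Q.n), S l.succ i ≤
        ∑ a ∈ Finset.univ.filter (fun a => Q.tgt a = i), S l.castSucc (Q.src a)) ∧
    ((∀ l : Fin L, ∃ x ∈ TruncRepVar Q (fun i => S l.castSucc i + S l.succ i) K 1,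
        radLayering Q (fun i => S l.castSucc i + S l.succ i) K 1 x
          = ![S l.castSucc, S l.succ]) ↔
      ∀ (l : Fin L) (i : Fin Q.n), S l.succ i ≤
        ∑ a ∈ Finset.univ.filter (fun a => Q.tgt a = i), S l.castSucc (Q.src a)) :=
  statement_10_general K Q L S
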